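/- (Planarity addendum to the Euclidean case of Proposition 6.5.) Let (X, d) be a metric space and let x₁, x₂, x₃, x₄ ∈ X be four pairwise distinct points forming a nondegenerate quadruple (all triangle inequalities among them strict) that satisfies, for every index i with {j, l, m} = {1,2,3,4} \ {i}: α₀(x_i; x_j, x_l) + α₀(x_i; x_j, x_m) + α₀(x_i; x_l, x_m) ≤ 2π and each of these three angles is at most the sum of the other two. If moreover there exists an index i for which one of the three comparison angles at x_i equals the sum of the other two, then there exist points p₁, p₂, p₃, p₄ in EuclideanSpace ℝ (Fin 2) with dist p_i p_j = d(x_i, x_j) for all i, j. -/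

import Mathlib

/-- The Euclidean comparison angle at `x` subtended by `y` and `z`:
the angle at the vertex corresponding to `x` of the Euclidean model
triangle with side lengths `dist x y`, `dist x z`, `dist y z`. -/
noncomputable def comparisonAngle₀ {X : Type*} [MetricSpace X] (x y z : X) : ℝ :=
  Real.arccos ((dist x y ^ 2 + dist x z ^ 2 - dist y z ^ 2) /
    (2 * dist x y * dist x z))

/-!
At the distinguished vertex `o`, the equality of angles says that the three directions towards the
other points have angular coordinates whose differences are the comparison angles: one direction is
at `0` and the two others lie on opposite sides of it. Placing each point in the plane at its
angular coordinate and at its distance from `o`, the Euclidean law of cosines recovers all six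
distances.
-/

section ComparisonAngle

variable {X : Type*} [MetricSpace X]

theorem comparisonAngle₀_comm (x y z : X) : comparisonAngle₀ x y z = comparisonAngle₀ x z y := by
  rw [comparisonAngle₀, comparisonAngle₀, dist_comm y z, add_comm (dist x y ^ 2), mul_right_comm]

theorem cos_comparisonAngle₀ {x y z : X} (hxy : x ≠ y) (hxz : x ≠ z) :
    Real.cos (comparisonAngle₀ x y z) =
      (dist x y ^ 2 + dist x z ^ 2 - dist y z ^ 2) / (2 * dist x y * dist x z) := by
  have hpos : 0 < 2 * dist x y * dist x z :=
    mul_pos (mul_pos two_pos (dist_pos.2 hxy)) (dist_pos.2 hxz)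
  have hupper : dist y z ^ 2 ≤ (dist x y + dist x z) ^ 2 :=
    pow_le_pow_left₀ dist_nonneg (dist_triangle_left y z x) 2
  have hlower : (dist x y - dist x z) ^ 2 ≤ dist y z ^ 2 := by
    rw [dist_comm x y, dist_comm x z]
    exact sq_le_sq.2 ((abs_dist_sub_le y z x).trans (le_abs_self _))
  apply Real.cos_arccos
  · rw [le_div_iff₀ hpos]
    linarith
  · rw [div_le_one hpos]
    linarith

theorem law_cos_comparisonAngle₀ (x y z : X) :
    dist y z ^ 2 = dist x y ^ 2 + dist x z ^ 2 -
      2 * dist x y * dist x z * Real.cos (comparisonAngle₀ x y z) := by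
  rcases eq_or_ne x y with rfl | hxy
  · simp
  rcases eq_or_ne x z with rfl | hxz
  · simp [dist_comm]
  have hy : dist x y ≠ 0 := dist_ne_zero.2 hxy
  have hz : dist x z ≠ 0 := dist_ne_zero.2 hxz
  rw [cos_comparisonAngle₀ hxy hxz]
  field_simp
  ring

end ComparisonAngle

/-- The point of the Euclidean plane with polar coordinates `(r, θ)`, used to place a point of a
metric space by its distance from a base point and an angular coordinate. -/
noncomputable def polarPoint (r θ : ℝ) : EuclideanSpace ℝ (Fin 2) :=
  !₂[r * Real.cos θ, r * Real.sin θ]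

theorem dist_polarPoint_sq (r s θ φ : ℝ) :
    dist (polarPoint r θ) (polarPoint s φ) ^ 2 =
      r ^ 2 + s ^ 2 - 2 * r * s * Real.cos (θ - φ) := by
  simp only [polarPoint, EuclideanSpace.dist_sq_eq, Fin.sum_univ_two, Real.dist_eq, sq_abs,
    Matrix.cons_val_zero, Matrix.cons_val_one, Real.cos_sub]
  linear_combination r ^ 2 * Real.sin_sq_add_cos_sq θ + s ^ 2 * Real.sin_sq_add_cos_sq φ

section PlanarEmbedding

variable {X ι : Type*} [MetricSpace X]

/-- The function `θ` provides angular coordinates, as seen from `o`, for the points `x a` with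
`a ∈ s`: the comparison angle at `o` between any two of them is the difference of their coordinates,
up to sign and multiples of `2π` (hence the cosines). -/
def IsAngularCoordinateOn (o : X) (x : ι → X) (θ : ι → ℝ) (s : Set ι) : Prop :=
  s.Pairwise fun a b => Real.cos (comparisonAngle₀ o (x a) (x b)) = Real.cos (θ a - θ b)

theorem IsAngularCoordinateOn.mono {o : X} {x : ι → X} {θ : ι → ℝ} {s t : Set ι}
    (hθ : IsAngularCoordinateOn o x θ t) (hst : s ⊆ t) : IsAngularCoordinateOn o x θ s :=
  Set.Pairwise.mono hst hθ

/-- Points at `o` itself are exempt: they are placed at the origin, whatever their junk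
comparison angle `π / 2` at `o`. -/
theorem IsAngularCoordinateOn.exists_planar_embedding {o : X} {x : ι → X} {θ : ι → ℝ}
    (hθ : IsAngularCoordinateOn o x θ {a | x a ≠ o}) :
    ∃ p : ι → EuclideanSpace ℝ (Fin 2), ∀ a b, dist (p a) (p b) = dist (x a) (x b) := by
  refine ⟨fun a => polarPoint (dist o (x a)) (θ a), fun a b => ?_⟩
  rcases eq_or_ne a b with rfl | hab
  · simp only [dist_self]
  rw [← sq_eq_sq₀ dist_nonneg dist_nonneg, dist_polarPoint_sq,
    law_cos_comparisonAngle₀ o (x a) (x b)]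
  rcases eq_or_ne (x a) o with ha | ha
  · simp [ha]
  rcases eq_or_ne (x b) o with hb | hb
  · simp [hb]
  rw [hθ ha hb hab]

theorem exists_isAngularCoordinateOn_of_cos_eq_cos_add (o : X) (x : ι → X) {j l m : ι}
    (hjl : j ≠ l) (hjm : j ≠ m) (hlm : l ≠ m)
    (h : Real.cos (comparisonAngle₀ o (x j) (x l)) =
      Real.cos (comparisonAngle₀ o (x j) (x m) + comparisonAngle₀ o (x l) (x m))) :
    ∃ θ : ι → ℝ, IsAngularCoordinateOn o x θ {j, l, m} := by
  classical
  let θ : ι → ℝ :=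
    Pi.single j (comparisonAngle₀ o (x j) (x m)) - Pi.single l (comparisonAngle₀ o (x l) (x m))
  have hθj : θ j = comparisonAngle₀ o (x j) (x m) := by simp [θ, hjl]
  have hθl : θ l = -comparisonAngle₀ o (x l) (x m) := by simp [θ, hjl.symm]
  have hθm : θ m = 0 := by simp [θ, hjm.symm, hlm.symm]
  have hsymm : Std.Symm fun a b =>
      Real.cos (comparisonAngle₀ o (x a) (x b)) = Real.cos (θ a - θ b) := ⟨fun a b hab => by
    rw [comparisonAngle₀_comm, hab, ← Real.cos_neg, neg_sub]⟩
  refine ⟨θ, ?_⟩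
  simp only [IsAngularCoordinateOn, Set.pairwise_insert_of_symm, Set.pairwise_singleton,
    Set.mem_insert_iff, Set.mem_singleton_iff, forall_eq_or_imp, forall_eq, hθj, hθl, hθm, h,
    sub_neg_eq_add, sub_zero, Real.cos_neg, implies_true, and_self]

end PlanarEmbedding

/-- As comparison angles lie in `[0, π]`, equality of the cosines covers both degenerate
configurations of three directions: one angle is the sum of the other two, or all three add up
to `2π`. -/
theorem quadruple_planar_embedding_of_angle_equality_general
    {X : Type*} [MetricSpace X] (x : Fin 4 → X) {i j l m : Fin 4}
    (hij : i ≠ j) (hil : i ≠ l) (him : i ≠ m) (hjl : j ≠ l) (hjm : j ≠ m) (hlm : l ≠ m)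
    (h : Real.cos (comparisonAngle₀ (x i) (x j) (x l)) =
      Real.cos (comparisonAngle₀ (x i) (x j) (x m) + comparisonAngle₀ (x i) (x l) (x m))) :
    ∃ p : Fin 4 → EuclideanSpace ℝ (Fin 2), ∀ a b, dist (p a) (p b) = dist (x a) (x b) := by
  obtain ⟨θ, hθ⟩ := exists_isAngularCoordinateOn_of_cos_eq_cos_add (x i) x hjl hjm hlm h
  have hsubset : {a | x a ≠ x i} ⊆ {j, l, m} := fun a ha => by
    have hai : a ≠ i := ne_of_apply_ne x ha
    change a = j ∨ a = l ∨ a = m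
    omega
  exact (hθ.mono hsubset).exists_planar_embedding

/-- Planarity addendum to the Euclidean case of Proposition 6.5: if a
nondegenerate metric quadruple satisfies the comparison-angle embedding
conditions and at some point one comparison angle equals the sum of the
other two, then the quadruple embeds isometrically in the Euclidean
plane. -/
theorem quadruple_planar_embedding_of_angle_equality
    {X : Type*} [MetricSpace X] (x : Fin 4 → X)
    (hinj : Function.Injective x)
    (hnd : ∀ i j k : Fin 4, i ≠ j → j ≠ k → i ≠ k →
      dist (x i) (x k) < dist (x i) (x j) + dist (x j) (x k))
    (hcond : ∀ i j l m : Fin 4, i ≠ j → i ≠ l → i ≠ m → j ≠ l → j ≠ m → l ≠ m →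
      (comparisonAngle₀ (x i) (x j) (x l) + comparisonAngle₀ (x i) (x j) (x m) +
          comparisonAngle₀ (x i) (x l) (x m) ≤ 2 * Real.pi ∧
        comparisonAngle₀ (x i) (x j) (x l) ≤
          comparisonAngle₀ (x i) (x j) (x m) + comparisonAngle₀ (x i) (x l) (x m)))
    (heq : ∃ i j l m : Fin 4, i ≠ j ∧ i ≠ l ∧ i ≠ m ∧ j ≠ l ∧ j ≠ m ∧ l ≠ m ∧
      comparisonAngle₀ (x i) (x j) (x l) =
        comparisonAngle₀ (x i) (x j) (x m) + comparisonAngle₀ (x i) (x l) (x m)) :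
    ∃ p : Fin 4 → EuclideanSpace ℝ (Fin 2),
      ∀ i j, dist (p i) (p j) = dist (x i) (x j) := by
  obtain ⟨i, j, l, m, hij, hil, him, hjl, hjm, hlm, hangle⟩ := heq
  exact quadruple_planar_embedding_of_angle_equality_general x hij hil him hjl hjm hlm
    (congrArg Real.cos hangle)
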